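/- Let M be a graded-free chain complex of R-modules and let (V̄, d̄) := M ⊗_R k be its reduction modulo m. Then there exists an R-linear degree −1 endomorphism ω of the graded R-module V̄ ⊗_k R (a family ωₙ : V̄ₙ ⊗_k R → V̄ₙ₋₁ ⊗_k R) whose image lies in V̄ ⊗_k m, such that (d̄ ⊗ 1 + ω)² = 0 and such that M is isomorphic, as a chain complex of R-modules, to (V̄ ⊗_k R, d̄ ⊗ 1 + ω); moreover the isomorphism can be chosen so that its reduction modulo m is the identity of V̄. -/

import Mathlib

/-!
Let `k` be a field and `R` a commutative local Artinian `k`-algebra with residue field `k`.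
Every graded-free chain complex `M` of `R`-modules is isomorphic, as a chain complex of
`R`-modules, to a twist `(V̄ ⊗_k R, d̄ ⊗ 1 + ω)` of the base change to `R` of its reduction
`V̄ := M ⊗_R k`, where `ω` is an `R`-linear degree `-1` perturbation with image in
`V̄ ⊗_k m`; moreover the isomorphism can be chosen to reduce to the identity of `V̄` mod `m`.
Here `V̄ ⊗_k R` is realised as `R ⊗[k] (k ⊗[R] Mₙ)`.
-/

open TensorProduct

variable (k R : Type) [Field k] [CommRing R] [Algebra k R] [Algebra R k]
  [IsScalarTower k R k] [IsLocalRing R] [IsArtinianRing R]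

/-!
Base change followed by reduction is naturally the identity: `k ⊗_R (R ⊗_k V) ≅ V`. Transporting
`d` along isomorphisms `R ⊗_k V̄ₙ ≃ Mₙ` that reduce to these canonical ones yields a differential
with the same reduction `d̄` as `d̄ ⊗ 1`. The difference `ω` of the two therefore reduces to zero,
which means that its image lies in `V̄ ⊗_k m`. Such isomorphisms exist because a basis of `Mₙ`
induces one of `R ⊗_k V̄ₙ`.
-/

section Reduction

variable {R A M N : Type*} [CommRing R] [Semiring A] [Algebra R A] [AddCommGroup M] [Module R M]
  [AddCommGroup N] [Module R N]

theorem ker_tensorProductMk_one_of_surjective (hA : Function.Surjective (algebraMap R A)) :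
    LinearMap.ker (TensorProduct.mk R A M 1) = RingHom.ker (algebraMap R A) • ⊤ := by
  let quotientEquiv : (R ⧸ RingHom.ker (algebraMap R A)) ≃ₐ[R] A :=
    Ideal.quotientKerAlgEquivOfSurjective (f := Algebra.ofId R A) hA
  have mk_eq : TensorProduct.mk R A M 1 =
      (quotientEquiv.toLinearEquiv.rTensor M).toLinearMap ∘ₗ TensorProduct.mk R _ M 1 := by
    ext x
    simp
  rw [mk_eq, LinearEquiv.ker_comp, LinearMap.ker_tensorProductMk]

theorem baseChange_eq_zero_iff_range_le_ker_smul_top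
    (hA : Function.Surjective (algebraMap R A)) (f : M →ₗ[R] N) :
    f.baseChange A = 0 ↔ LinearMap.range f ≤ RingHom.ker (algebraMap R A) • ⊤ := by
  rw [← ker_tensorProductMk_one_of_surjective hA, LinearMap.range_le_ker_iff]
  refine ⟨fun hf => ?_, fun hf => ?_⟩
  · ext x
    exact LinearMap.congr_fun hf (1 ⊗ₜ x)
  · ext x
    exact LinearMap.congr_fun hf x

end Reduction

section Twist

variable {k R : Type*} [CommRing k] [CommRing R] [Algebra k R] [Algebra R k]
  {M N : Type*} [AddCommGroup M] [Module R M] [AddCommGroup N] [Module R N]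

/-- The perturbation `ω` for which `f̄ ⊗ 1 + ω` is the transport of `f : M → N` along
isomorphisms `R ⊗_k M̄ ≃ M` and `R ⊗_k N̄ ≃ N`, where the bar denotes reduction `k ⊗_R -`.
For a differential `f` it is the Maurer–Cartan twist. -/
noncomputable def reductionTwist (eM : R ⊗[k] (k ⊗[R] M) ≃ₗ[R] M)
    (eN : R ⊗[k] (k ⊗[R] N) ≃ₗ[R] N) (f : M →ₗ[R] N) :
    R ⊗[k] (k ⊗[R] M) →ₗ[R] R ⊗[k] (k ⊗[R] N) :=
  LinearEquiv.arrowCongr eM.symm eN.symm f - (f.baseChange k).baseChange R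

theorem baseChange_baseChange_add_reductionTwist (eM : R ⊗[k] (k ⊗[R] M) ≃ₗ[R] M)
    (eN : R ⊗[k] (k ⊗[R] N) ≃ₗ[R] N) (f : M →ₗ[R] N) :
    (f.baseChange k).baseChange R + reductionTwist eM eN f =
      LinearEquiv.arrowCongr eM.symm eN.symm f :=
  LinearMap.ext fun _ => add_sub_cancel _ _

end Twist

section AugmentedAlgebra

variable {k R : Type*} [CommRing k] [CommRing R] [Algebra k R] [Algebra R k] [IsScalarTower k R k]

theorem surjective_algebraMap_of_isScalarTower_self : Function.Surjective (algebraMap R k) :=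
  fun a => ⟨algebraMap k R a, (IsScalarTower.algebraMap_apply k R k a).symm⟩

variable (k R) in
/-- The canonical isomorphism `k ⊗_R (R ⊗_k V) ≅ V` identifying the reduction of the base change
of `V` with `V`, for an augmented `k`-algebra `R`. The augmentation is encoded by `Algebra R k`
together with `IsScalarTower k R k`. -/
noncomputable def reductionBaseChangeEquiv (V : Type*) [AddCommGroup V] [Module k V] :
    k ⊗[R] (R ⊗[k] V) ≃ₗ[k] V :=
  AlgebraTensorModule.cancelBaseChange k R k k V ≪≫ₗ TensorProduct.lid k V

theorem reductionBaseChangeEquiv_one_tmul_one_tmul {V : Type*} [AddCommGroup V] [Module k V]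
    (v : V) : reductionBaseChangeEquiv k R V (1 ⊗ₜ (1 ⊗ₜ v)) = v := by
  simp [reductionBaseChangeEquiv]

theorem reductionBaseChangeEquiv_comp_baseChange_baseChange {V W : Type*} [AddCommGroup V]
    [Module k V] [AddCommGroup W] [Module k W] (f : V →ₗ[k] W) :
    (reductionBaseChangeEquiv k R W).toLinearMap ∘ₗ (f.baseChange R).baseChange k =
      f ∘ₗ (reductionBaseChangeEquiv k R V).toLinearMap := by
  have lid_comp_baseChange : (TensorProduct.lid k W).toLinearMap ∘ₗ f.baseChange k =
      f ∘ₗ (TensorProduct.lid k V).toLinearMap := by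
    ext v
    simp
  rw [LinearMap.baseChange_baseChange]
  ext x
  simpa [reductionBaseChangeEquiv] using LinearMap.congr_fun lid_comp_baseChange
    (AlgebraTensorModule.cancelBaseChange k R k k V x)

theorem exists_linearEquiv_baseChange_eq_reductionBaseChangeEquiv (M : Type*) [AddCommGroup M]
    [Module R M] [Module.Free R M] :
    ∃ e : R ⊗[k] (k ⊗[R] M) ≃ₗ[R] M,
      e.toLinearMap.baseChange k = (reductionBaseChangeEquiv k R (k ⊗[R] M)).toLinearMap := by
  let b := Module.Free.chooseBasis R M
  let b' := (b.baseChange k).baseChange R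
  refine ⟨b'.equiv b (Equiv.refl _), (b'.baseChange k).ext fun i => ?_⟩
  calc (b'.equiv b (Equiv.refl _)).toLinearMap.baseChange k (b'.baseChange k i)
      = 1 ⊗ₜ b i := by
        rw [Module.Basis.baseChange_apply, LinearMap.baseChange_tmul, LinearEquiv.coe_coe,
          Module.Basis.equiv_apply, Equiv.refl_apply]
    _ = reductionBaseChangeEquiv k R (k ⊗[R] M) (b'.baseChange k i) := by
        simp only [b', Module.Basis.baseChange_apply, reductionBaseChangeEquiv_one_tmul_one_tmul]

variable {M N : Type*} [AddCommGroup M] [Module R M] [AddCommGroup N] [Module R N]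

theorem baseChange_reductionTwist_eq_zero {eM : R ⊗[k] (k ⊗[R] M) ≃ₗ[R] M}
    {eN : R ⊗[k] (k ⊗[R] N) ≃ₗ[R] N}
    (heM : eM.toLinearMap.baseChange k = (reductionBaseChangeEquiv k R (k ⊗[R] M)).toLinearMap)
    (heN : eN.toLinearMap.baseChange k = (reductionBaseChangeEquiv k R (k ⊗[R] N)).toLinearMap)
    (f : M →ₗ[R] N) : (reductionTwist eM eN f).baseChange k = 0 := by
  have comp_transport :
      eN.toLinearMap ∘ₗ LinearEquiv.arrowCongr eM.symm eN.symm f = f ∘ₗ eM.toLinearMap := by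
    ext x
    simp
  have reduction_eq : eN.toLinearMap.baseChange k ∘ₗ
        (LinearEquiv.arrowCongr eM.symm eN.symm f).baseChange k =
      eN.toLinearMap.baseChange k ∘ₗ ((f.baseChange k).baseChange R).baseChange k := by
    rw [← LinearMap.baseChange_comp, comp_transport, LinearMap.baseChange_comp, heM, heN,
      reductionBaseChangeEquiv_comp_baseChange_baseChange]
  rw [heN, LinearMap.cancel_left (reductionBaseChangeEquiv k R _).injective] at reduction_eq
  rw [reductionTwist, LinearMap.baseChange_sub]
  exact LinearMap.ext fun x => sub_eq_zero_of_eq (LinearMap.congr_fun reduction_eq x)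

theorem gradedFree_complex_iso_twisted_baseChange_of_reduction_general
    (M : ℤ → Type*) [∀ n, AddCommGroup (M n)] [∀ n, Module R (M n)] [∀ n, Module.Free R (M n)]
    (d : ∀ n : ℤ, M n →ₗ[R] M (n - 1)) (hd : ∀ n : ℤ, d (n - 1) ∘ₗ d n = 0) :
    ∃ ω : ∀ n : ℤ, R ⊗[k] (k ⊗[R] M n) →ₗ[R] R ⊗[k] (k ⊗[R] M (n - 1)),
      (∀ n x, ω n x ∈ RingHom.ker (algebraMap R k) •
        (⊤ : Submodule R (R ⊗[k] (k ⊗[R] M (n - 1))))) ∧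
      (∀ n, (((d (n - 1)).baseChange k).baseChange R + ω (n - 1)) ∘ₗ
        (((d n).baseChange k).baseChange R + ω n) = 0) ∧
      ∃ e : ∀ n : ℤ, R ⊗[k] (k ⊗[R] M n) ≃ₗ[R] M n,
        (∀ n x, e (n - 1) ((((d n).baseChange k).baseChange R + ω n) x) = d n (e n x)) ∧
        ∀ (n : ℤ) (v : k ⊗[R] M n),
          (e n).toLinearMap.baseChange k ((1 : k) ⊗ₜ[R] ((1 : R) ⊗ₜ[k] v)) = v := by
  choose e he using fun n =>
    exists_linearEquiv_baseChange_eq_reductionBaseChangeEquiv (k := k) (R := R) (M n)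
  refine ⟨fun n => reductionTwist (e n) (e (n - 1)) (d n), fun n x => ?image_mem,
    fun n => ?sq_zero, e, fun n x => ?chain_map, fun n v => ?reduction_id⟩
  case image_mem =>
    exact (baseChange_eq_zero_iff_range_le_ker_smul_top
      surjective_algebraMap_of_isScalarTower_self _).mp
        (baseChange_reductionTwist_eq_zero (he n) (he (n - 1)) (d n)) ⟨x, rfl⟩
  case sq_zero =>
    rw [baseChange_baseChange_add_reductionTwist, baseChange_baseChange_add_reductionTwist,
      ← LinearEquiv.arrowCongr_comp, hd, map_zero]
  case chain_map =>
    rw [baseChange_baseChange_add_reductionTwist, LinearEquiv.arrowCongr_apply,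
      LinearEquiv.apply_symm_apply, LinearEquiv.symm_symm]
  case reduction_id =>
    rw [he]
    exact reductionBaseChangeEquiv_one_tmul_one_tmul v

end AugmentedAlgebra

theorem gradedFree_complex_iso_twisted_baseChange_of_reduction
    (hker : RingHom.ker (algebraMap R k) = IsLocalRing.maximalIdeal R)
    (M : ℤ → Type) [∀ n, AddCommGroup (M n)] [∀ n, Module R (M n)]
    (hfree : ∀ n, Module.Free R (M n))
    (d : ∀ n : ℤ, M n →ₗ[R] M (n - 1))
    (hd : ∀ n : ℤ, (d (n - 1)).comp (d n) = 0) :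
    -- `ω` : an `R`-linear degree `-1` family on `V̄ ⊗_k R = R ⊗[k] (k ⊗[R] Mₙ)` ...
    ∃ ω : ∀ n : ℤ, (R ⊗[k] (k ⊗[R] M n)) →ₗ[R] (R ⊗[k] (k ⊗[R] M (n - 1))),
      -- ... with image in `V̄ ⊗_k m` ...
      (∀ (n : ℤ) (x : R ⊗[k] (k ⊗[R] M n)),
        ω n x ∈ (IsLocalRing.maximalIdeal R) •
          (⊤ : Submodule R (R ⊗[k] (k ⊗[R] M (n - 1))))) ∧
      -- ... such that `(d̄ ⊗ 1 + ω)² = 0` ...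
      (∀ n : ℤ,
        ((LinearMap.baseChange R (LinearMap.baseChange k (d (n - 1))) + ω (n - 1)).comp
          (LinearMap.baseChange R (LinearMap.baseChange k (d n)) + ω n)) = 0) ∧
      -- ... and `M ≅ (V̄ ⊗_k R, d̄ ⊗ 1 + ω)` as chain complexes of `R`-modules, the
      -- isomorphism reducing to the identity of `V̄` modulo `m`.
      ∃ e : ∀ n : ℤ, (R ⊗[k] (k ⊗[R] M n)) ≃ₗ[R] M n,
        (∀ (n : ℤ) (x : R ⊗[k] (k ⊗[R] M n)),
          e (n - 1) ((LinearMap.baseChange R (LinearMap.baseChange k (d n)) + ω n) x)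
            = d n (e n x)) ∧
        (∀ (n : ℤ) (v : k ⊗[R] M n),
          LinearMap.baseChange k ((e n : (R ⊗[k] (k ⊗[R] M n)) →ₗ[R] M n))
            ((1 : k) ⊗ₜ[R] ((1 : R) ⊗ₜ[k] v)) = v) := by
  simpa only [hker] using
    gradedFree_complex_iso_twisted_baseChange_of_reduction_general (k := k) M d hd
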